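/- There is no finite group G of order 72 containing subgroups U ≅ D3 and V ≅ A4 with U ∩ V ≅ Z/3Z such that U and V generate G. -/

import Mathlib

/-! Let `K = ⁅V, V⁆` be the Klein four-group of `V` and `N` its normalizer. As `8 ∣ |G|`, the
`2`-group `K` is not a Sylow subgroup, so `8 ∣ |N|`; also `V ≤ N`, so `24 ∣ |N|` and `[G : N] ∣ 3`.
If `[G : N] = 3`, then `G` acts transitively on the three points of `G ⧸ N`, and `V` fixes one of
them; hence `V` acts through a group of order at most `2`, that is, trivially, because `V` has no
subgroup of index `2`. So `G = ⟨U, V⟩` acts through a quotient of `U / (U ∩ V)`, a group of order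
`2`, which cannot be transitive on three points. Hence `K` is normal, and since `V = (U ∩ V) K`,
the group `G = ⟨U, V⟩ = U K` has order at most `6 * 4`. -/

section Index

variable {G : Type*} [Group G] {H N U V K : Subgroup G}

theorem index_dvd_relIndex_of_sup_eq_top [N.Normal] (hVN : V ≤ N) (hUV : U ⊔ V = ⊤) :
    N.index ∣ V.relIndex U := by
  have hUN : U ⊔ N = ⊤ := top_le_iff.mp (hUV ▸ sup_le_sup_left hVN U)
  rw [← Subgroup.relIndex_top_right, ← hUN, Subgroup.relIndex_sup_right]
  exact Subgroup.relIndex_dvd_of_le_left U hVN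

open Nat in
theorem index_normalCore_dvd_factorial (H : Subgroup G) [H.FiniteIndex] :
    H.normalCore.index ∣ H.index ! := by
  rw [H.normalCore_eq_ker, Subgroup.index_ker, Subgroup.index_eq_card, ← Nat.card_perm]
  exact Subgroup.card_subgroup_dvd_card _

open Nat in
theorem relIndex_normalCore_dvd_factorial (H : Subgroup G) [H.FiniteIndex] :
    H.normalCore.relIndex H ∣ (H.index - 1)! := by
  have hpos : 0 < H.index := Nat.pos_of_ne_zero Subgroup.FiniteIndex.index_ne_zero
  refine Nat.dvd_of_mul_dvd_mul_right hpos ?_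
  rw [Subgroup.relIndex_mul_index H.normalCore_le, mul_comm, Nat.mul_factorial_pred hpos.ne']
  exact index_normalCore_dvd_factorial H

theorem commutator_le_of_index_eq_two (hH : H.index = 2) : commutator G ≤ H := by
  have : H.Normal := Subgroup.normal_of_index_eq_two hH
  have : Fact (Nat.Prime 2) := ⟨Nat.prime_two⟩
  rw [← Subgroup.Normal.quotient_commutative_iff_commutator_le]
  exact (isCyclic_of_prime_card (p := 2) hH).isMulCommutative

theorem eq_top_of_index_dvd_two (hG : Odd (commutator G).index) (hH : H.index ∣ 2) : H = ⊤ := by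
  rcases (Nat.dvd_prime Nat.prime_two).mp hH with h | h
  · exact Subgroup.index_eq_one.mp h
  · have : 2 ∣ (commutator G).index :=
      h ▸ Subgroup.index_dvd_of_le (commutator_le_of_index_eq_two h)
    exact absurd this hG.not_two_dvd_nat

theorem relIndex_dvd_relIndex_of_normal [N.Normal] (hVH : V ≤ H) :
    N.relIndex V ∣ N.relIndex H := by
  rw [← Subgroup.relIndex_subgroupOf hVH]
  exact Subgroup.relIndex_dvd_index_of_normal _ _

theorem le_normalCore_of_index_eq_three (hV : Odd (commutator V).index) (hVH : V ≤ H)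
    (hH : H.index = 3) : V ≤ H.normalCore := by
  have : H.FiniteIndex := ⟨by simp [hH]⟩
  have hcore : H.normalCore.relIndex H ∣ 2 := by
    simpa [hH] using relIndex_normalCore_dvd_factorial H
  exact Subgroup.subgroupOf_eq_top.mp <|
    eq_top_of_index_dvd_two hV ((relIndex_dvd_relIndex_of_normal hVH).trans hcore)

theorem index_ne_three_of_sup_eq_top (hV : Odd (commutator V).index) (hVH : V ≤ H)
    (hUV : U ⊔ V = ⊤) (hrel : V.relIndex U = 2) : H.index ≠ 3 := by
  intro hH
  have h32 : 3 ∣ 2 := by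
    calc 3 = H.index := hH.symm
      _ ∣ H.normalCore.index := Subgroup.index_dvd_of_le H.normalCore_le
      _ ∣ V.relIndex U :=
        index_dvd_relIndex_of_sup_eq_top (le_normalCore_of_index_eq_three hV hVH hH) hUV
      _ = 2 := hrel
  norm_num at h32

theorem card_inf_mul_relIndex (U V : Subgroup G) :
    Nat.card (U ⊓ V : Subgroup G) * V.relIndex U = Nat.card U := by
  rw [inf_comm, ← Subgroup.relIndex_bot_left, Subgroup.relIndex_inf_mul_relIndex, bot_inf_eq,
    Subgroup.relIndex_bot_left]

theorem sup_eq_of_coprime_card [Finite V] (hHV : H ≤ V) (hKV : K ≤ V)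
    (hcop : (Nat.card H).Coprime (Nat.card K)) (hV : Nat.card V = Nat.card H * Nat.card K) :
    H ⊔ K = V := by
  refine Subgroup.eq_of_le_of_card_ge (sup_le hHV hKV) (Nat.le_of_dvd ?_ ?_)
  · have : Finite (H ⊔ K : Subgroup G) := Finite.Set.subset (V : Set G) (sup_le hHV hKV)
    exact Nat.card_pos
  · exact hV ▸ hcop.mul_dvd_of_dvd_of_dvd (Subgroup.card_dvd_of_le le_sup_left)
      (Subgroup.card_dvd_of_le le_sup_right)

end Index

section Commutator

variable {G G' : Type*} [Group G] [Group G']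

theorem card_commutator_congr (e : G ≃* G') :
    Nat.card (commutator G) = Nat.card (commutator G') := by
  have hmap : (commutator G).map (e : G →* G') = commutator G' := by
    rw [map_commutator_eq, MonoidHom.range_eq_top.mpr e.surjective, commutator_def]
  rw [← hmap, Subgroup.card_map_of_injective e.injective]

theorem card_of_mulEquiv_alternatingGroup (e : G ≃* alternatingGroup (Fin 4)) :
    Nat.card G = 12 := by
  rw [Nat.card_congr e.toEquiv, alternatingGroup.card_of_card_eq_four (Nat.card_fin 4)]

theorem card_commutator_of_mulEquiv_alternatingGroup (e : G ≃* alternatingGroup (Fin 4)) :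
    Nat.card (commutator G) = 4 := by
  have hfour : Nat.card (Fin 4) = 4 := Nat.card_fin 4
  rw [card_commutator_congr e, ← alternatingGroup.kleinFour_eq_commutator hfour,
    alternatingGroup.kleinFour_card_of_card_eq_four hfour]

theorem odd_index_commutator_of_mulEquiv_alternatingGroup (e : G ≃* alternatingGroup (Fin 4)) :
    Odd (commutator G).index := by
  have hmul := (commutator G).card_mul_index
  rw [card_commutator_of_mulEquiv_alternatingGroup e, card_of_mulEquiv_alternatingGroup e] at hmul
  exact ⟨1, by omega⟩

theorem card_bracket_self_of_mulEquiv_alternatingGroup {V : Subgroup G}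
    (e : V ≃* alternatingGroup (Fin 4)) : Nat.card (⁅V, V⁆ : Subgroup G) = 4 := by
  rw [← V.map_subtype_commutator, Subgroup.card_map_of_injective V.subtype_injective,
    card_commutator_of_mulEquiv_alternatingGroup e]

end Commutator

section OrderSeventyTwo

variable {G : Type*} [Group G] {U V K : Subgroup G}

theorem index_normalizer_dvd_three (hG : Nat.card G = 72) (hK : Nat.card K = 4)
    (hV : Nat.card V = 12) (hVK : V ≤ Subgroup.normalizer K) :
    (Subgroup.normalizer (K : Set G)).index ∣ 3 := by
  have : Finite G := Nat.finite_of_card_ne_zero (by simp [hG])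
  have : Fact (Nat.Prime 2) := ⟨Nat.prime_two⟩
  have h8 : 8 ∣ Nat.card (Subgroup.normalizer (K : Set G)) :=
    Sylow.prime_pow_dvd_card_normalizer (p := 2) (n := 2) (by norm_num [hG]) hK
  have h12 : 12 ∣ Nat.card (Subgroup.normalizer (K : Set G)) :=
    hV ▸ Subgroup.card_dvd_of_le hVK
  have h24 : 24 ∣ Nat.card (Subgroup.normalizer (K : Set G)) := Nat.lcm_dvd h8 h12
  refine Nat.dvd_of_mul_dvd_mul_left (k := 24) (by norm_num) ?_
  calc 24 * (Subgroup.normalizer (K : Set G)).index ∣ _ := mul_dvd_mul_right h24 _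
    _ = 24 * 3 := by rw [Subgroup.card_mul_index, hG]

theorem normal_commutator_of_sup_eq_top (hG : Nat.card G = 72)
    (e : V ≃* alternatingGroup (Fin 4)) (hrel : V.relIndex U = 2) (hUV : U ⊔ V = ⊤) :
    (⁅V, V⁆ : Subgroup G).Normal := by
  have hK := card_bracket_self_of_mulEquiv_alternatingGroup e
  have hVK := Subgroup.normalizer_commutator_ge_left V V
  have hdvd := index_normalizer_dvd_three hG hK (card_of_mulEquiv_alternatingGroup e) hVK
  rw [← Subgroup.normalizer_eq_top_iff, ← Subgroup.index_eq_one]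
  exact ((Nat.dvd_prime Nat.prime_three).mp hdvd).resolve_right <|
    index_ne_three_of_sup_eq_top (odd_index_commutator_of_mulEquiv_alternatingGroup e) hVK hUV hrel

theorem inf_sup_commutator_eq (e : V ≃* alternatingGroup (Fin 4))
    (hUV : Nat.card (U ⊓ V : Subgroup G) = 3) : (U ⊓ V) ⊔ ⁅V, V⁆ = V := by
  have hV := card_of_mulEquiv_alternatingGroup e
  have hK := card_bracket_self_of_mulEquiv_alternatingGroup e
  have : Finite V := Nat.finite_of_card_ne_zero (by simp [hV])
  refine sup_eq_of_coprime_card inf_le_right V.commutator_le_self ?_ ?_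
  · rw [hUV, hK]
    norm_num
  · rw [hV, hUV, hK]

end OrderSeventyTwo

theorem no_order_72_gen_by_D3_A4_general {G : Type*} [Group G] (hG : Nat.card G = 72)
    {U V : Subgroup G} (hU : Nat.card U = 6) (hV : Nonempty (V ≃* alternatingGroup (Fin 4)))
    (hUV : Nat.card (U ⊓ V : Subgroup G) = 3) : U ⊔ V ≠ ⊤ := by
  intro hgen
  obtain ⟨e⟩ := hV
  have hrel : V.relIndex U = 2 := by
    have hmul := card_inf_mul_relIndex U V
    rw [hUV, hU] at hmul
    omega
  have : (⁅V, V⁆ : Subgroup G).Normal := normal_commutator_of_sup_eq_top hG e hrel hgen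
  have hsup : U ⊔ ⁅V, V⁆ = ⊤ := by
    calc U ⊔ ⁅V, V⁆ = U ⊔ ((U ⊓ V) ⊔ ⁅V, V⁆) := by rw [← sup_assoc, sup_inf_self]
      _ = ⊤ := by rw [inf_sup_commutator_eq e hUV, hgen]
  have hdvd : (⁅V, V⁆ : Subgroup G).index ∣ 6 :=
    hU ▸ (index_dvd_relIndex_of_sup_eq_top le_rfl hsup).trans (Subgroup.relIndex_dvd_card _ _)
  have hmul := (⁅V, V⁆ : Subgroup G).card_mul_index
  rw [card_bracket_self_of_mulEquiv_alternatingGroup e, hG] at hmul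
  have hle := Nat.le_of_dvd (by norm_num) hdvd
  omega

theorem no_order_72_gen_by_D3_A4 (G : Type*) [Group G] [Finite G]
    (hG : Nat.card G = 72) (U V : Subgroup G)
    (hU : Nonempty (U ≃* DihedralGroup 3))
    (hV : Nonempty (V ≃* alternatingGroup (Fin 4)))
    (hUV : Nonempty ((↥(U ⊓ V)) ≃* Multiplicative (ZMod 3))) :
    U ⊔ V ≠ ⊤ := by
  exact no_order_72_gen_by_D3_A4_general hG
    ((Nat.card_congr hU.some.toEquiv).trans DihedralGroup.nat_card) hV
    ((Nat.card_congr hUV.some.toEquiv).trans (Nat.card_zmod 3))
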